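/- arXiv:2506.07780 — 3 statements merged into one kernel-verified Lean document; each statement's English description precedes it below -/
import Mathlib

section
/- Let u : ℝ → ℝ → ℝ be a smooth function of (x,t) with u(x,t) ≠ 0 for all (x,t), satisfying the 2nd potential Kupershmidt equation u_t = u_{5x} - 5·u_{xx}u_{4x}/u_x - (15/4)·u_{xxx}²/u_x + (65/4)·u_{xx}²u_{xxx}/u_x² - (135/16)·u_{xx}⁴/u_x³, with u_x(x,t) ≠ 0 for all (x,t). Then for any constant c ∈ ℝ, the function ū(x,t) := -1/u(x,t) + c also satisfies the 2nd potential Kupershmidt equation ū_t = ū_{5x} - 5·ū_{xx}ū_{4x}/ū_x - (15/4)·ū_{xxx}²/ū_x + (65/4)·ū_{xx}²ū_{xxx}/ū_x² - (135/16)·ū_{xx}⁴/ū_x³. -/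
/-!
With `S = (u_{xx} / u_x)_x - (u_{xx} / u_x)² / 2` the Schwarzian derivative of `u` in `x`, the
equation reads `u_t / u_x = S_{xx} + S² / 4`. Replacing `u` by a Möbius transform of it multiplies
`u_t` and `u_x` by the same factor and does not change `S`, so the equation is preserved; and
`-1 / u + c = (c u - 1) / u` is a Möbius transform of `u`.
-/

/-- Total `x`-derivative of a function of `(x, t)`. -/
noncomputable def dx (f : ℝ → ℝ → ℝ) : ℝ → ℝ → ℝ := fun x t => deriv (fun y => f y t) x

/-- Total `t`-derivative of a function of `(x, t)`. -/
noncomputable def dt (f : ℝ → ℝ → ℝ) : ℝ → ℝ → ℝ := fun x t => deriv (fun s => f x s) t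

/-- The 2nd potential Kupershmidt equation. -/
def Kup2 (u : ℝ → ℝ → ℝ) : Prop :=
  ∀ x t, dt u x t =
    dx (dx (dx (dx (dx u)))) x t
    - 5 * dx (dx u) x t * dx (dx (dx (dx u))) x t / dx u x t
    - (15/4) * (dx (dx (dx u)) x t)^2 / dx u x t
    + (65/4) * (dx (dx u) x t)^2 * dx (dx (dx u)) x t / (dx u x t)^2
    - (135/16) * (dx (dx u) x t)^4 / (dx u x t)^3

section Schwarzian

variable {𝕜 : Type*} [NontriviallyNormedField 𝕜] {f : 𝕜 → 𝕜} {a b c d x : 𝕜}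

/-- The Schwarzian derivative `S f = (f'' / f')' - (f'' / f')² / 2`, which measures how far `f` is
from a Möbius transformation. It takes junk values where `f'` vanishes. -/
noncomputable def schwarzian (f : 𝕜 → 𝕜) : 𝕜 → 𝕜 := fun x =>
  deriv (logDeriv (deriv f)) x - logDeriv (deriv f) x ^ 2 / 2

/-- The Möbius transformation `z ↦ (a z + b) / (c z + d)`, as a function on the affine line; at the
pole it has the junk value `0`. -/
noncomputable def moebius (a b c d z : 𝕜) : 𝕜 := (a * z + b) / (c * z + d)

lemma neg_one_div_add_eq_moebius {z : 𝕜} (hz : z ≠ 0) : -1 / z + c = moebius c (-1) 1 0 z := by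
  rw [moebius, one_mul, add_zero]
  field_simp
  ring

lemma hasDerivAt_moebius {z : 𝕜} (hz : c * z + d ≠ 0) :
    HasDerivAt (moebius a b c d) ((a * d - b * c) / (c * z + d) ^ 2) z := by
  have affine (p q : 𝕜) : HasDerivAt (fun w => p * w + q) p z := by
    simpa using ((hasDerivAt_id z).const_mul p).add_const q
  refine ((affine a b).fun_div (affine c d) hz).congr_deriv ?_
  ring

lemma deriv_moebius_comp (hf : DifferentiableAt 𝕜 f x) (hpole : c * f x + d ≠ 0) :
    deriv (fun y => moebius a b c d (f y)) x = (a * d - b * c) / (c * f x + d) ^ 2 * deriv f x :=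
  ((hasDerivAt_moebius hpole).comp x hf.hasDerivAt).deriv

lemma contDiff_moebius_comp {n : WithTop ℕ∞} (hf : ContDiff 𝕜 n f)
    (hpole : ∀ x, c * f x + d ≠ 0) : ContDiff 𝕜 n (fun y => moebius a b c d (f y)) :=
  ((contDiff_const.mul hf).add contDiff_const).div
    ((contDiff_const.mul hf).add contDiff_const) hpole

lemma logDeriv_deriv_moebius_comp (hdet : a * d - b * c ≠ 0) (hf : Differentiable 𝕜 f)
    (hf' : DifferentiableAt 𝕜 (deriv f) x) (hpole : ∀ x, c * f x + d ≠ 0)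
    (hx : deriv f x ≠ 0) :
    logDeriv (deriv fun y => moebius a b c d (f y)) x =
      logDeriv (deriv f) x - 2 * logDeriv (fun y => c * f y + d) x := by
  have hden : DifferentiableAt 𝕜 (fun y => c * f y + d) x := by fun_prop
  have hderiv : (deriv fun y => moebius a b c d (f y)) =
      fun y => (a * d - b * c) * (deriv f y / (c * f y + d) ^ 2) := by
    funext y
    rw [deriv_moebius_comp (hf y) (hpole y)]
    ring
  rw [hderiv, logDeriv_const_mul x _ hdet,
    logDeriv_div (g := fun y => (c * f y + d) ^ 2) x hx (pow_ne_zero 2 (hpole x)) hf'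
      (hden.fun_pow 2),
    logDeriv_fun_pow hden, Nat.cast_ofNat]

lemma hasDerivAt_logDeriv_affine_comp (hf : Differentiable 𝕜 f)
    (hf' : DifferentiableAt 𝕜 (deriv f) x) (hpole : c * f x + d ≠ 0) (hx : deriv f x ≠ 0) :
    HasDerivAt (logDeriv fun y => c * f y + d)
      (logDeriv (fun y => c * f y + d) x *
        (logDeriv (deriv f) x - logDeriv (fun y => c * f y + d) x)) x := by
  have hden (y : 𝕜) : HasDerivAt (fun y => c * f y + d) (c * deriv f y) y :=
    ((hf y).hasDerivAt.const_mul c).add_const d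
  have hlog : (logDeriv fun y => c * f y + d) = fun y => c * deriv f y / (c * f y + d) := by
    funext y
    rw [logDeriv_apply, (hden y).deriv]
  rw [hlog]
  refine ((hf'.hasDerivAt.const_mul c).fun_div (hden x) hpole).congr_deriv ?_
  rw [logDeriv_apply]
  field_simp

lemma differentiable_logDeriv_deriv (hf : ContDiff 𝕜 3 f) (hne : ∀ x, deriv f x ≠ 0) :
    Differentiable 𝕜 (logDeriv (deriv f)) := by
  have hf' : ContDiff 𝕜 2 (deriv f) := hf.deriv'
  exact (hf'.differentiable_deriv_two).div (hf'.differentiable two_ne_zero) hne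

/-- With `P = f'' / f'` and `q = c f' / (c f + d)`, the transformation replaces `P` by `P - 2 q`,
and `q' = q (P - q)` makes the extra terms of `P' - P² / 2` cancel. -/
theorem schwarzian_moebius_comp [NeZero (2 : 𝕜)] (hdet : a * d - b * c ≠ 0) (hf : ContDiff 𝕜 3 f)
    (hne : ∀ x, deriv f x ≠ 0) (hpole : ∀ x, c * f x + d ≠ 0) :
    schwarzian (fun y => moebius a b c d (f y)) = schwarzian f := by
  have hfd : Differentiable 𝕜 f := hf.differentiable three_ne_zero
  have hfd' : Differentiable 𝕜 (deriv f) := (hf.of_le (by norm_num)).differentiable_deriv_two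
  have hP : (logDeriv (deriv fun y => moebius a b c d (f y))) =
      fun x => logDeriv (deriv f) x - 2 * logDeriv (fun y => c * f y + d) x :=
    funext fun x => logDeriv_deriv_moebius_comp hdet hfd (hfd' x) hpole (hne x)
  funext x
  have hq := hasDerivAt_logDeriv_affine_comp hfd (hfd' x) (hpole x) (hne x)
  have hP' := (differentiable_logDeriv_deriv hf hne x).hasDerivAt.fun_sub (hq.const_mul 2)
  have htwo : (2 : 𝕜) ≠ 0 := two_ne_zero
  rw [schwarzian, schwarzian, hP, hP'.deriv]
  field_simp
  ring

lemma hasDerivAt_iteratedDeriv {n : ℕ} (hf : ContDiff 𝕜 (n + 1) f) (x : 𝕜) :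
    HasDerivAt (iteratedDeriv n f) (iteratedDeriv (n + 1) f x) x := by
  rw [iteratedDeriv_succ]
  exact (hf.differentiable_iteratedDeriv' n x).hasDerivAt

lemma schwarzian_eq_iteratedDeriv [NeZero (2 : 𝕜)] (hf : ContDiff 𝕜 3 f)
    (hne : ∀ x, iteratedDeriv 1 f x ≠ 0) :
    schwarzian f = fun x => iteratedDeriv 3 f x / iteratedDeriv 1 f x
      - 3 / 2 * (iteratedDeriv 2 f x / iteratedDeriv 1 f x) ^ 2 := by
  have h₁ := hasDerivAt_iteratedDeriv (n := 1) (hf.of_le (by norm_num))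
  have h₂ := hasDerivAt_iteratedDeriv (n := 2) (hf.of_le (by norm_num))
  have htwo : (2 : 𝕜) ≠ 0 := two_ne_zero
  have hP : logDeriv (deriv f) = fun x => iteratedDeriv 2 f x / iteratedDeriv 1 f x := by
    funext x
    rw [logDeriv_apply, iteratedDeriv_succ, iteratedDeriv_one]
  funext x
  have hx := hne x
  rw [schwarzian, hP, ((h₂ x).fun_div (h₁ x) hx).deriv]
  field_simp
  ring

lemma deriv_schwarzian [NeZero (2 : 𝕜)] (hf : ContDiff 𝕜 4 f)
    (hne : ∀ x, iteratedDeriv 1 f x ≠ 0) :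
    deriv (schwarzian f) = fun x => iteratedDeriv 4 f x / iteratedDeriv 1 f x
      - 4 * (iteratedDeriv 2 f x * iteratedDeriv 3 f x / iteratedDeriv 1 f x ^ 2)
      + 3 * (iteratedDeriv 2 f x / iteratedDeriv 1 f x) ^ 3 := by
  have h₁ := hasDerivAt_iteratedDeriv (n := 1) (hf.of_le (by norm_num))
  have h₂ := hasDerivAt_iteratedDeriv (n := 2) (hf.of_le (by norm_num))
  have h₃ := hasDerivAt_iteratedDeriv (n := 3) (hf.of_le (by norm_num))
  have htwo : (2 : 𝕜) ≠ 0 := two_ne_zero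
  rw [schwarzian_eq_iteratedDeriv (hf.of_le (by norm_num)) hne]
  funext x
  have hx := hne x
  have hS := ((h₃ x).fun_div (h₁ x) hx).fun_sub
    ((((h₂ x).fun_div (h₁ x) hx).fun_pow 2).const_mul (3 / 2))
  rw [hS.deriv]
  simp only [Nat.reduceSub, Nat.reduceAdd, Nat.cast_ofNat]
  field_simp
  ring

lemma deriv_deriv_schwarzian [NeZero (2 : 𝕜)] (hf : ContDiff 𝕜 5 f)
    (hne : ∀ x, iteratedDeriv 1 f x ≠ 0) :
    deriv (deriv (schwarzian f)) = fun x => iteratedDeriv 5 f x / iteratedDeriv 1 f x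
      - (5 * (iteratedDeriv 2 f x * iteratedDeriv 4 f x) + 4 * iteratedDeriv 3 f x ^ 2)
        / iteratedDeriv 1 f x ^ 2
      + 17 * (iteratedDeriv 2 f x ^ 2 * iteratedDeriv 3 f x / iteratedDeriv 1 f x ^ 3)
      - 9 * (iteratedDeriv 2 f x / iteratedDeriv 1 f x) ^ 4 := by
  have h₁ := hasDerivAt_iteratedDeriv (n := 1) (hf.of_le (by norm_num))
  have h₂ := hasDerivAt_iteratedDeriv (n := 2) (hf.of_le (by norm_num))
  have h₃ := hasDerivAt_iteratedDeriv (n := 3) (hf.of_le (by norm_num))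
  have h₄ := hasDerivAt_iteratedDeriv (n := 4) (hf.of_le (by norm_num))
  rw [deriv_schwarzian (hf.of_le (by norm_num)) hne]
  funext x
  have hx := hne x
  have hS' := (((h₄ x).fun_div (h₁ x) hx).fun_sub
    ((((h₂ x).fun_mul (h₃ x)).fun_div ((h₁ x).fun_pow 2) (pow_ne_zero 2 hx)).const_mul 4)).fun_add
    ((((h₂ x).fun_div (h₁ x) hx).fun_pow 3).const_mul 3)
  rw [hS'.deriv]
  simp only [Nat.reduceSub, Nat.reduceAdd, Nat.cast_ofNat]
  field_simp
  ring

end Schwarzian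

section Kupershmidt

variable {u : ℝ → ℝ → ℝ}

lemma dx_iterate (n : ℕ) (x t : ℝ) :
    dx^[n] u x t = iteratedDeriv n (fun y => u y t) x := by
  induction n generalizing x with
  | zero => rfl
  | succ n ih =>
    rw [Function.iterate_succ_apply', iteratedDeriv_succ, ← funext ih]
    rfl

theorem kup2_iff_schwarzian (hu : ∀ t, ContDiff ℝ 5 (fun y => u y t))
    (hux : ∀ x t, dx u x t ≠ 0) :
    Kup2 u ↔ ∀ x t, dt u x t = dx u x t *
      (deriv (deriv (schwarzian fun y => u y t)) x + schwarzian (fun y => u y t) x ^ 2 / 4) := by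
  refine forall₂_congr fun x t => ?_
  have hne (y : ℝ) : iteratedDeriv 1 (fun y => u y t) y ≠ 0 := dx_iterate 1 y t ▸ hux y t
  have hx := hux x t
  rw [deriv_deriv_schwarzian (hu t) hne,
    schwarzian_eq_iteratedDeriv ((hu t).of_le (by norm_num)) hne]
  simp only [← dx_iterate, Function.iterate_succ_apply, Function.iterate_zero_apply]
  refine Eq.congr_right ?_
  field_simp
  ring

theorem kup2_invariance_inverse_general {a b c d : ℝ} (hdet : a * d - b * c ≠ 0)
    (hu : ∀ t, ContDiff ℝ 5 (fun y => u y t)) (hut : ∀ x, Differentiable ℝ (u x))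
    (hpole : ∀ x t, c * u x t + d ≠ 0) (hux : ∀ x t, dx u x t ≠ 0) (heq : Kup2 u) :
    Kup2 (fun x t => moebius a b c d (u x t)) := by
  have hdx (x t : ℝ) : dx (fun x t => moebius a b c d (u x t)) x t =
      (a * d - b * c) / (c * u x t + d) ^ 2 * dx u x t :=
    deriv_moebius_comp ((hu t).differentiable (by norm_num) x) (hpole x t)
  have hdt (x t : ℝ) : dt (fun x t => moebius a b c d (u x t)) x t =
      (a * d - b * c) / (c * u x t + d) ^ 2 * dt u x t :=
    deriv_moebius_comp (hut x t) (hpole x t)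
  have hdx_ne (x t : ℝ) : dx (fun x t => moebius a b c d (u x t)) x t ≠ 0 := by
    rw [hdx]
    exact mul_ne_zero (div_ne_zero hdet (pow_ne_zero 2 (hpole x t))) (hux x t)
  have hS (t : ℝ) : schwarzian (fun y => moebius a b c d (u y t)) = schwarzian fun y => u y t :=
    schwarzian_moebius_comp hdet ((hu t).of_le (by norm_num)) (hux · t) (hpole · t)
  rw [kup2_iff_schwarzian hu hux] at heq
  rw [kup2_iff_schwarzian (fun t => contDiff_moebius_comp (hu t) (hpole · t)) hdx_ne]
  intro x t
  rw [hdx, hdt, hS, heq, mul_assoc]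

end Kupershmidt

/-- Invariance of the 2nd potential Kupershmidt equation under `u ↦ -1/u + c`. -/
theorem kup2_invariance_inverse
    (u : ℝ → ℝ → ℝ)
    (hu : ContDiff ℝ (⊤ : ℕ∞) (fun p : ℝ × ℝ => u p.1 p.2))
    (hne : ∀ x t, u x t ≠ 0)
    (hux : ∀ x t, dx u x t ≠ 0)
    (heq : Kup2 u) (c : ℝ) :
    Kup2 (fun x t => -1 / u x t + c) := by
  simp only [neg_one_div_add_eq_moebius (hne _ _)]
  exact kup2_invariance_inverse_general (by norm_num)
    (fun _ => (contDiff_infty.mp hu 5).comp (contDiff_id.prodMk contDiff_const))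
    (fun _ => (hu.comp (contDiff_const.prodMk contDiff_id)).differentiable (by simp))
    (by simpa using hne) hux heq
end

section
/- Let v : ℝ → ℝ → ℝ be a smooth function of (x,t) with v(x,t) ≠ 0 and v_x(x,t) ≠ 0 for all (x,t), satisfying the 3rd potential Kupershmidt equation v_t = v_{5x} - 5·v_{xx}v_{4x}/v_x + 5·v_{xx}²v_{xxx}/v_x². Then both K := -v_{xx}/v_x and K̄ := -v_{xx}/v_x + 2·v_x/v satisfy the Kupershmidt equation: K_t = K_{5x} - 5K_xK_{xxx} - 5K_{xx}² - 5K²K_{xxx} - 20KK_xK_{xx} - 5K_x³ + 5K⁴K_x, and likewise with K replaced by K̄. -/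
/-- The Kupershmidt equation. -/
def Kupershmidt (K : ℝ → ℝ → ℝ) : Prop :=
  ∀ x t, dt K x t =
    dx (dx (dx (dx (dx K)))) x t
    - 5 * dx K x t * dx (dx (dx K)) x t
    - 5 * (dx (dx K) x t)^2
    - 5 * (K x t)^2 * dx (dx (dx K)) x t
    - 20 * K x t * dx K x t * dx (dx K) x t
    - 5 * (dx K x t)^3
    + 5 * (K x t)^4 * dx K x t

/-- The 3rd potential Kupershmidt equation. -/
def Kup3 (v : ℝ → ℝ → ℝ) : Prop :=
  ∀ x t, dt v x t =
    dx (dx (dx (dx (dx v)))) x t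
    - 5 * dx (dx v) x t * dx (dx (dx (dx v))) x t / dx v x t
    + 5 * (dx (dx v) x t)^2 * dx (dx (dx v)) x t / (dx v x t)^2

open scoped Ring ContDiff Manifold

section LogarithmicDerivative

variable {k R : Type*} [CommRing k] [CommRing R] [Algebra k R] (X T : Derivation k R R)

/-- The logarithmic derivative `X u / u` of a unit `u` along a derivation `X`; it is `0` when `u`
is not a unit. -/
noncomputable def logDer (u : R) : R := X u * u⁻¹ʳ

variable {X T} {u w : R}

lemma logDer_mul_self (hu : IsUnit u) : logDer X u * u = X u :=
  Ring.inverse_mul_cancel_right u (X u) hu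

lemma logDer_eq_iff (hu : IsUnit u) {a : R} : logDer X u = a ↔ X u = a * u := by
  rw [logDer, eq_comm, Ring.eq_mul_inverse_iff_mul_eq _ _ _ hu, eq_comm]

lemma logDer_mul (hu : IsUnit u) (hw : IsUnit w) :
    logDer X (u * w) = logDer X u + logDer X w := by
  rw [logDer_eq_iff (hu.mul hw), X.leibniz, smul_eq_mul, smul_eq_mul, ← logDer_mul_self hu,
    ← logDer_mul_self hw]
  ring

lemma logDer_neg (hu : IsUnit u) : logDer X (-u) = logDer X u := by
  rw [logDer_eq_iff hu.neg, map_neg, ← logDer_mul_self hu, mul_neg]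

lemma derivation_ringInverse (hu : IsUnit u) : X u⁻¹ʳ = -(X u * (u⁻¹ʳ * u⁻¹ʳ)) := by
  rw [X.leibniz_of_mul_eq_one (Ring.inverse_mul_cancel u hu), smul_eq_mul]
  ring

lemma logDer_ringInverse (hu : IsUnit u) : logDer X u⁻¹ʳ = -logDer X u := by
  rw [logDer_eq_iff hu.ringInverse, derivation_ringInverse hu, logDer]
  ring

lemma derivation_logDer_comm (hXT : Function.Commute X T) (hu : IsUnit u) :
    T (logDer X u) = X (logDer T u) := by
  simp only [logDer, Derivation.leibniz, smul_eq_mul, derivation_ringInverse hu, hXT.eq u]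
  ring

lemma derivation_logDer_self (hu : IsUnit u) (hXu : IsUnit (X u)) :
    X (logDer X u) = logDer X u * (logDer X (X u) - logDer X u) := by
  have hXXu := logDer_mul_self (X := X) hXu
  simp only [logDer, Derivation.leibniz, smul_eq_mul, derivation_ringInverse hu] at hXXu ⊢
  linear_combination -u⁻¹ʳ * hXXu

lemma isUnit_derivation_ringInverse (hu : IsUnit u) (hXu : IsUnit (X u)) : IsUnit (X u⁻¹ʳ) := by
  rw [derivation_ringInverse hu]
  exact (hXu.mul (hu.ringInverse.mul hu.ringInverse)).neg

lemma logDer_derivation_ringInverse (hu : IsUnit u) (hXu : IsUnit (X u)) :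
    logDer X (X u⁻¹ʳ) = logDer X (X u) - 2 * logDer X u := by
  have hu' := hu.ringInverse
  rw [derivation_ringInverse hu, logDer_neg (hXu.mul (hu'.mul hu')), logDer_mul hXu (hu'.mul hu'),
    logDer_mul hu' hu', logDer_ringInverse hu]
  ring

end LogarithmicDerivative

section KupershmidtFlow

variable {k R : Type*} [CommRing k] [CommRing R] [Algebra k R] (X T : Derivation k R R)

/-- The right-hand side of the Kupershmidt equation, as a differential polynomial in `K`. -/
def kupershmidtRHS (K : R) : R :=
  X (X (X (X (X K)))) - 5 * X K * X (X (X K)) - 5 * X (X K) ^ 2 - 5 * K ^ 2 * X (X (X K))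
    - 20 * K * X K * X (X K) - 5 * X K ^ 3 + 5 * K ^ 4 * X K

/-- The quotient `v_t / v_x` for a solution `v` of the 3rd potential Kupershmidt equation, as a
differential polynomial in `a = v_xx / v_x`. It is `S_xx + 4 S²`, where `S = a_x - a² / 2` is the
Schwarzian derivative of `v`, written so that no division by `2` occurs. -/
def potentialSpeed (a : R) : R := X (X (X a) - a * X a) + (2 * X a - a ^ 2) ^ 2

/-- The 3rd potential Kupershmidt equation in Schwarzian form, for a `v` such that `X v` is a
unit. -/
def SolvesPotentialKupershmidt (v : R) : Prop := T v = X v * potentialSpeed X (logDer X (X v))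

variable {X T}

lemma derivation_ofNat (n : ℕ) [n.AtLeastTwo] : X (ofNat(n) : R) = 0 :=
  X.map_natCast n

lemma potentialSpeed_sub_two_mul {a b : R} (hb : X b = b * (a - b)) :
    potentialSpeed X (a - 2 * b) = potentialSpeed X a := by
  have schwarzian_eq : 2 * X (a - 2 * b) - (a - 2 * b) ^ 2 = 2 * X a - a ^ 2 := by
    simp only [map_sub, Derivation.leibniz, derivation_ofNat, hb, smul_eq_mul]
    ring
  have schwarzian_deriv_eq :
      X (X (a - 2 * b)) - (a - 2 * b) * X (a - 2 * b) = X (X a) - a * X a := by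
    simp only [map_sub, map_add, Derivation.leibniz, derivation_ofNat, hb, smul_eq_mul, map_zero]
    ring
  rw [potentialSpeed, potentialSpeed, schwarzian_eq, schwarzian_deriv_eq]

lemma pow_three_mul_potentialSpeed {v a : R} (ha : X (X v) = a * X v) :
    X v ^ 3 * potentialSpeed X a =
      X v ^ 2 * X (X (X (X (X v)))) - 5 * X v * X (X v) * X (X (X (X v)))
        + 5 * X (X v) ^ 2 * X (X (X v)) := by
  simp only [potentialSpeed, ha, map_add, map_sub, Derivation.leibniz, smul_eq_mul]
  ring

lemma kupershmidtRHS_neg (a : R) :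
    kupershmidtRHS X (-a) = -X (X (potentialSpeed X a) + potentialSpeed X a * a) := by
  simp only [kupershmidtRHS, potentialSpeed, pow_succ, pow_zero, one_mul, map_neg, map_add,
    map_sub, Derivation.leibniz, derivation_ofNat, smul_eq_mul, map_zero, mul_zero]
  ring

lemma logDer_derivation_of_eq_derivation_mul {v P : R} (hXT : Function.Commute X T)
    (hXv : IsUnit (X v)) (hT : T v = X v * P) :
    logDer T (X v) = X P + P * logDer X (X v) := by
  rw [logDer_eq_iff hXv, ← hXT.eq v, hT, X.leibniz, smul_eq_mul, smul_eq_mul,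
    ← logDer_mul_self (X := X) hXv]
  ring

namespace SolvesPotentialKupershmidt

variable {v : R}

theorem kupershmidt_neg_logDer (hv : SolvesPotentialKupershmidt X T v)
    (hXT : Function.Commute X T) (hXv : IsUnit (X v)) :
    T (-logDer X (X v)) = kupershmidtRHS X (-logDer X (X v)) := by
  rw [map_neg, derivation_logDer_comm hXT hXv,
    logDer_derivation_of_eq_derivation_mul hXT hXv hv, kupershmidtRHS_neg]

theorem ringInverse (hv : SolvesPotentialKupershmidt X T v) (hu : IsUnit v)
    (hXv : IsUnit (X v)) : SolvesPotentialKupershmidt X T v⁻¹ʳ := by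
  have speed_eq : potentialSpeed X (logDer X (X v⁻¹ʳ)) = potentialSpeed X (logDer X (X v)) := by
    rw [logDer_derivation_ringInverse hu hXv,
      potentialSpeed_sub_two_mul (derivation_logDer_self hu hXv)]
  rw [SolvesPotentialKupershmidt] at hv
  rw [SolvesPotentialKupershmidt, speed_eq, derivation_ringInverse hu,
    derivation_ringInverse hu, hv]
  ring

theorem kupershmidt_neg_logDer_add_two_mul (hv : SolvesPotentialKupershmidt X T v)
    (hXT : Function.Commute X T) (hu : IsUnit v) (hXv : IsUnit (X v)) :
    T (-logDer X (X v) + 2 * logDer X v) =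
      kupershmidtRHS X (-logDer X (X v) + 2 * logDer X v) := by
  have hK_inv : -logDer X (X v⁻¹ʳ) = -logDer X (X v) + 2 * logDer X v := by
    rw [logDer_derivation_ringInverse hu hXv]
    ring
  rw [← hK_inv]
  exact (hv.ringInverse hu hXv).kupershmidt_neg_logDer hXT (isUnit_derivation_ringInverse hu hXv)

end SolvesPotentialKupershmidt

end KupershmidtFlow

section DirectionalDerivation

variable {𝕜 E : Type*} [NontriviallyNormedField 𝕜] [NormedAddCommGroup E] [NormedSpace 𝕜 E]

lemma differentiable_smoothMap (f : C^∞⟮𝓘(𝕜, E), E; 𝕜⟯) : Differentiable 𝕜 f :=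
  f.contMDiff.contDiff.differentiable (by simp)

lemma contDiff_fderiv_smoothMap (f : C^∞⟮𝓘(𝕜, E), E; 𝕜⟯) : ContDiff 𝕜 ∞ (fderiv 𝕜 f) :=
  f.contMDiff.contDiff.fderiv_right (by simp)

/-- The derivative in the constant direction `w`, as a derivation of the ring of smooth functions
on a normed space. -/
noncomputable def directionalDerivation (w : E) :
    Derivation 𝕜 C^∞⟮𝓘(𝕜, E), E; 𝕜⟯ C^∞⟮𝓘(𝕜, E), E; 𝕜⟯ where
  toFun f := ⟨fun p => fderiv 𝕜 f p w,
    ((contDiff_fderiv_smoothMap f).clm_apply contDiff_const).contMDiff⟩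
  map_add' f g := by
    ext p
    change fderiv 𝕜 (⇑f + ⇑g) p w = fderiv 𝕜 f p w + fderiv 𝕜 g p w
    rw [fderiv_add (differentiable_smoothMap f p) (differentiable_smoothMap g p)]
    rfl
  map_smul' c f := by
    ext p
    change fderiv 𝕜 (c • ⇑f) p w = c • fderiv 𝕜 f p w
    rw [fderiv_const_smul (differentiable_smoothMap f p)]
    rfl
  map_one_eq_zero' := by
    ext p
    change fderiv 𝕜 (fun _ => (1 : 𝕜)) p w = 0
    rw [fderiv_fun_const]
    rfl
  leibniz' f g := by
    ext p
    change fderiv 𝕜 (⇑f * ⇑g) p w = f p * fderiv 𝕜 g p w + g p * fderiv 𝕜 f p w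
    rw [fderiv_mul (differentiable_smoothMap f p) (differentiable_smoothMap g p)]
    rfl

lemma directionalDerivation_commute [IsRCLikeNormedField 𝕜] (w z : E) :
    Function.Commute (directionalDerivation (𝕜 := 𝕜) w) (directionalDerivation z) := by
  intro f
  ext p
  have fderiv_fderiv_apply (y : E) :
      fderiv 𝕜 (fun q => fderiv 𝕜 f q y) p = (fderiv 𝕜 (fderiv 𝕜 f) p).flip y := by
    rw [fderiv_clm_apply ((contDiff_fderiv_smoothMap f).differentiable (by simp) p)
      (differentiableAt_const y)]
    simp
  have symm : IsSymmSndFDerivAt 𝕜 f p :=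
    f.contMDiff.contDiff.contDiffAt.isSymmSndFDerivAt (by
      rw [minSmoothness_of_isRCLikeNormedField]
      exact WithTop.coe_le_coe.2 le_top)
  change fderiv 𝕜 (fun q => fderiv 𝕜 f q z) p w = fderiv 𝕜 (fun q => fderiv 𝕜 f q w) p z
  simpa only [fderiv_fderiv_apply, ContinuousLinearMap.flip_apply] using symm.eq w z

lemma smoothMap_ofNat_apply (n : ℕ) [n.AtLeastTwo] (p : E) :
    (ofNat(n) : C^∞⟮𝓘(𝕜, E), E; 𝕜⟯) p = ofNat(n) :=
  map_ofNat (ContMDiffMap.evalRingHom p) n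

lemma isUnit_smoothMap_iff {f : C^∞⟮𝓘(𝕜, E), E; 𝕜⟯} : IsUnit f ↔ ∀ p, f p ≠ 0 := by
  refine ⟨fun hf p => (hf.map (ContMDiffMap.evalRingHom p)).ne_zero, fun hf => ?_⟩
  refine IsUnit.of_mul_eq_one ⟨fun p => (f p)⁻¹, (f.contMDiff.contDiff.inv hf).contMDiff⟩ ?_
  ext p
  exact mul_inv_cancel₀ (hf p)

lemma logDer_smoothMap_apply (D : Derivation 𝕜 C^∞⟮𝓘(𝕜, E), E; 𝕜⟯ C^∞⟮𝓘(𝕜, E), E; 𝕜⟯)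
    {f : C^∞⟮𝓘(𝕜, E), E; 𝕜⟯} (hf : IsUnit f) (p : E) : logDer D f p = D f p / f p :=
  eq_div_of_mul_eq (isUnit_smoothMap_iff.1 hf p) (DFunLike.congr_fun (logDer_mul_self hf) p)

end DirectionalDerivation

section Plane

/-- The ring of smooth functions of `(x, t)`. -/
abbrev SmoothPlane : Type := C^∞⟮𝓘(ℝ, ℝ × ℝ), ℝ × ℝ; ℝ⟯

/-- The derivation `∂/∂x`. -/
noncomputable abbrev derivX : Derivation ℝ SmoothPlane SmoothPlane :=
  directionalDerivation ((1, 0) : ℝ × ℝ)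

/-- The derivation `∂/∂t`. -/
noncomputable abbrev derivT : Derivation ℝ SmoothPlane SmoothPlane :=
  directionalDerivation ((0, 1) : ℝ × ℝ)

lemma dx_curry (f : SmoothPlane) : dx (Function.curry f) = Function.curry (derivX f) := by
  funext x t
  exact ((differentiable_smoothMap f (x, t)).hasFDerivAt.comp_hasDerivAt x
    ((hasDerivAt_id x).prodMk (hasDerivAt_const x t))).deriv

lemma dt_curry (f : SmoothPlane) : dt (Function.curry f) = Function.curry (derivT f) := by
  funext x t
  exact ((differentiable_smoothMap f (x, t)).hasFDerivAt.comp_hasDerivAt t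
    ((hasDerivAt_const t x).prodMk (hasDerivAt_id t))).deriv

lemma kupershmidt_curry {K : SmoothPlane} (hK : derivT K = kupershmidtRHS derivX K) :
    Kupershmidt (Function.curry K) := by
  intro x t
  have hK_at := DFunLike.congr_fun hK (x, t)
  simp only [kupershmidtRHS, ContMDiffMap.coe_add, ContMDiffMap.coe_sub, ContMDiffMap.coe_mul,
    ContMDiffMap.coe_pow, Pi.add_apply, Pi.sub_apply, Pi.mul_apply, Pi.pow_apply,
    smoothMap_ofNat_apply] at hK_at
  simpa only [dx_curry, dt_curry, Function.curry_apply] using hK_at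

lemma solvesPotentialKupershmidt_of_kup3 {v : SmoothPlane} (hvx : IsUnit (derivX v))
    (hv : Kup3 (Function.curry v)) : SolvesPotentialKupershmidt derivX derivT v := by
  ext ⟨x, t⟩
  have hvx_ne := isUnit_smoothMap_iff.1 hvx (x, t)
  have hv_at := hv x t
  have speed_at := DFunLike.congr_fun
    (pow_three_mul_potentialSpeed (logDer_mul_self (X := derivX) hvx).symm) (x, t)
  simp only [dx_curry, dt_curry, Function.curry_apply] at hv_at
  simp only [ContMDiffMap.coe_add, ContMDiffMap.coe_sub, ContMDiffMap.coe_mul, ContMDiffMap.coe_pow,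
    Pi.add_apply, Pi.sub_apply, Pi.mul_apply, Pi.pow_apply, smoothMap_ofNat_apply] at speed_at
  rw [hv_at, ContMDiffMap.coe_mul, Pi.mul_apply]
  field_simp
  linear_combination -speed_at

end Plane

/-- Proposition 4 a): nonlocal invariance of the Kupershmidt equation,
`K = -[ln v_x]_x` and `K̄ = K + 2[ln v]_x` both solve the Kupershmidt equation. -/
theorem kupershmidt_nonlocal_invariance
    (v : ℝ → ℝ → ℝ)
    (hv : ContDiff ℝ (⊤ : ℕ∞) (fun p : ℝ × ℝ => v p.1 p.2))
    (hne : ∀ x t, v x t ≠ 0)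
    (hvx : ∀ x t, dx v x t ≠ 0)
    (heq : Kup3 v) :
    Kupershmidt (fun x t => -(dx (dx v) x t) / dx v x t) ∧
    Kupershmidt (fun x t => -(dx (dx v) x t) / dx v x t + 2 * dx v x t / v x t) := by
  obtain ⟨u, rfl⟩ : ∃ u : SmoothPlane, Function.curry u = v :=
    ⟨⟨fun p => v p.1 p.2, hv.contMDiff⟩, rfl⟩
  have hu : IsUnit u := isUnit_smoothMap_iff.2 fun p => hne p.1 p.2
  simp only [dx_curry] at hvx ⊢
  have hux : IsUnit (derivX u) := isUnit_smoothMap_iff.2 fun p => hvx p.1 p.2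
  have hcomm : Function.Commute derivX derivT := directionalDerivation_commute _ _
  have hflow := solvesPotentialKupershmidt_of_kup3 hux heq
  constructor
  · convert kupershmidt_curry (hflow.kupershmidt_neg_logDer hcomm hux) using 3 with x t
    simp [logDer_smoothMap_apply, hux, neg_div]
  · convert kupershmidt_curry (hflow.kupershmidt_neg_logDer_add_two_mul hcomm hu hux) using 3
    simp [logDer_smoothMap_apply, smoothMap_ofNat_apply, hu, hux, neg_div, mul_div_assoc]
end

section
/- Let v : ℝ → ℝ → ℝ be a smooth function of (x,t) with v(x,t) > 0 and v_x(x,t) > 0 for all (x,t), satisfying the 3rd potential Kupershmidt equation v_t = v_{5x} - 5·v_{xx}v_{4x}/v_x + 5·v_{xx}²v_{xxx}/v_x². Then both U := (1/2)·ln 2 - ln(v_x) and Ū := (1/2)·ln 2 - ln(v_x) + 2·ln(v) satisfy the 1st potential Kupershmidt equation: U_t = U_{5x} - 5U_{xx}U_{xxx} - 5U_x²U_{xxx} - 5U_xU_{xx}² + U_x⁵, and likewise with U replaced by Ū. -/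
/-- The 1st potential Kupershmidt equation. -/
def Kup1 (U : ℝ → ℝ → ℝ) : Prop :=
  ∀ x t, dt U x t =
    dx (dx (dx (dx (dx U)))) x t
    - 5 * dx (dx U) x t * dx (dx (dx U)) x t
    - 5 * (dx U x t)^2 * dx (dx (dx U)) x t
    - 5 * dx U x t * (dx (dx U) x t)^2
    + (dx U x t)^5

section DifferentialAlgebra

variable {R A : Type*} [CommRing R] [CommRing A] [Algebra R A]

/-- The Miura map `q ↦ q_x - q²`. At `q = v_xx / (2 v_x)` it is half the Schwarzian derivative of
`v`; the factor is chosen so that no division by `2` is needed. -/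
def miura (D : Derivation R A A) (q : A) : A :=
  D q - q ^ 2

/-- The factor `F = S_xx + 4 S²` of the Schwarzian evolution equation `v_t = v_x F`, where
`S = 2 * miura D q` is the Schwarzian derivative of `v`. -/
def schwarzianFlux (D : Derivation R A A) (q : A) : A :=
  2 * D (D (miura D q)) + 16 * miura D q ^ 2

/-- The right-hand side of the 1st potential Kupershmidt equation, for `D` in the role of `∂/∂x`. -/
def kup1Field (D : Derivation R A A) (u : A) : A :=
  D (D (D (D (D u)))) - 5 * D (D u) * D (D (D u)) - 5 * D u ^ 2 * D (D (D u))
    - 5 * D u * D (D u) ^ 2 + D u ^ 5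

/-- The Schwarzian form `v_t = v_x F` of the 3rd potential Kupershmidt equation, for `Dx` and `Dt`
in the roles of `∂/∂x` and `∂/∂t`. The quotient `q = v_xx / (2 v_x)` in `F` is encoded as a solution
of `v_xx = 2 q v_x`. -/
def IsSchwarzianSolution (Dx Dt : Derivation R A A) (v : A) : Prop :=
  ∃ q, Dx (Dx v) = 2 * q * Dx v ∧ Dt v = Dx v * schwarzianFlux Dx q

lemma derivation_ofNat_mul (D : Derivation R A A) (n : ℕ) [n.AtLeastTwo] (a : A) :
    D (ofNat(n) * a) = ofNat(n) * D a := by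
  simpa only [nsmul_eq_mul, Nat.cast_ofNat] using map_nsmul D (OfNat.ofNat n) a

lemma schwarzianFlux_eq (D : Derivation R A A) (q : A) :
    schwarzianFlux D q =
      2 * D (D (D q)) - 4 * q * D (D q) + 12 * D q ^ 2 - 32 * q ^ 2 * D q + 16 * q ^ 4 := by
  simp only [schwarzianFlux, miura, pow_two, map_sub, map_add, Derivation.leibniz, smul_eq_mul]
  ring

lemma kup1Field_eq_of_derivation_eq (D : Derivation R A A) {u q : A} (hu : D u = -(2 * q)) :
    kup1Field D u = -(D (schwarzianFlux D q) + 2 * q * schwarzianFlux D q) := by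
  simp only [kup1Field, schwarzianFlux_eq, hu, pow_succ, pow_zero, one_mul, mul_assoc, map_neg,
    map_sub, map_add, derivation_ofNat_mul, Derivation.leibniz, smul_eq_mul]
  ring

lemma kup3_numerator_eq (D : Derivation R A A) {v q : A} (hv : D (D v) = 2 * q * D v) :
    D v ^ 2 * D (D (D (D (D v)))) - 5 * D v * D (D v) * D (D (D (D v)))
      + 5 * D (D v) ^ 2 * D (D (D v)) = D v ^ 3 * schwarzianFlux D q := by
  simp only [schwarzianFlux_eq, hv, mul_assoc, map_add, derivation_ofNat_mul, Derivation.leibniz,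
    smul_eq_mul]
  ring

lemma derivation_eq_sq_mul_of_mul_eq_neg_one (D : Derivation R A A) {v w : A} (h : w * v = -1) :
    D w = w ^ 2 * D v := by
  have hD : w * D v + v * D w = 0 := by
    simpa only [Derivation.leibniz, smul_eq_mul, map_neg, Derivation.map_one_eq_zero, neg_zero]
      using congrArg D h
  linear_combination D w * h - w * hD

lemma miura_sub_of_derivation_eq (D : Derivation R A A) {q r : A}
    (hr : D r = 2 * q * r - r ^ 2) : miura D (q - r) = miura D q := by
  simp only [miura, map_sub, hr]
  ring

lemma IsSchwarzianSolution.of_mul_eq_neg_one {Dx Dt : Derivation R A A} {v w : A}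
    (hv : IsSchwarzianSolution Dx Dt v) (h : w * v = -1) : IsSchwarzianSolution Dx Dt w := by
  obtain ⟨q, hq, hflow⟩ := hv
  have hwx : Dx w = w ^ 2 * Dx v := derivation_eq_sq_mul_of_mul_eq_neg_one Dx h
  have hwt : Dt w = w ^ 2 * Dt v := derivation_eq_sq_mul_of_mul_eq_neg_one Dt h
  -- `-(w * Dx v)` is the logarithmic derivative `v_x / v`.
  have hmiura : miura Dx (q - -(w * Dx v)) = miura Dx q := by
    apply miura_sub_of_derivation_eq
    simp only [map_neg, Derivation.leibniz, smul_eq_mul, hq, hwx]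
    ring
  refine ⟨q - -(w * Dx v), ?_, ?_⟩
  · simp only [hwx, pow_two, Derivation.leibniz, smul_eq_mul, hq]
    ring
  · rw [schwarzianFlux, hmiura, ← schwarzianFlux, hwt, hflow, hwx, mul_assoc]

/-- The hypotheses `hux` and `hut` say that `u` is `-ln v_x` up to an additive constant. -/
lemma IsSchwarzianSolution.derivation_eq_kup1Field {Dx Dt : Derivation R A A} {u v : A}
    (hv : IsSchwarzianSolution Dx Dt v) (hcomm : Dt (Dx v) = Dx (Dt v))
    (hreg : IsLeftRegular (Dx v)) (hux : Dx v * Dx u = -Dx (Dx v))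
    (hut : Dx v * Dt u = -Dt (Dx v)) : Dt u = kup1Field Dx u := by
  obtain ⟨q, hq, hflow⟩ := hv
  have hu : Dx u = -(2 * q) := hreg <| by
    linear_combination hux - hq
  have hvxt : Dt (Dx v) = Dx v * (Dx (schwarzianFlux Dx q) + 2 * q * schwarzianFlux Dx q) := by
    rw [hcomm, hflow, Derivation.leibniz, hq, smul_eq_mul, smul_eq_mul]
    ring
  rw [kup1Field_eq_of_derivation_eq Dx hu]
  exact hreg <| by linear_combination hut - hvxt

end DifferentialAlgebra

section PartialDerivatives

open Function

variable {f g : ℝ → ℝ → ℝ}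

lemma hasDerivAt_fderiv_uncurry_left {x t : ℝ} (hf : DifferentiableAt ℝ (uncurry f) (x, t)) :
    HasDerivAt (fun y => f y t) (fderiv ℝ (uncurry f) (x, t) (1, 0)) x :=
  hf.hasFDerivAt.comp_hasDerivAt (f := fun y => (y, t)) x
    ((hasDerivAt_id x).prodMk (hasDerivAt_const x t))

lemma hasDerivAt_fderiv_uncurry_right {x t : ℝ} (hf : DifferentiableAt ℝ (uncurry f) (x, t)) :
    HasDerivAt (fun s => f x s) (fderiv ℝ (uncurry f) (x, t) (0, 1)) t :=
  hf.hasFDerivAt.comp_hasDerivAt (f := fun s => (x, s)) t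
    ((hasDerivAt_const t x).prodMk (hasDerivAt_id t))

lemma uncurry_dx (hf : Differentiable ℝ (uncurry f)) :
    uncurry (dx f) = fun p => fderiv ℝ (uncurry f) p (1, 0) :=
  funext fun p => (hasDerivAt_fderiv_uncurry_left (hf p)).deriv

lemma uncurry_dt (hf : Differentiable ℝ (uncurry f)) :
    uncurry (dt f) = fun p => fderiv ℝ (uncurry f) p (0, 1) :=
  funext fun p => (hasDerivAt_fderiv_uncurry_right (hf p)).deriv

lemma hasDerivAt_dx (hf : Differentiable ℝ (uncurry f)) (x t : ℝ) :
    HasDerivAt (fun y => f y t) (dx f x t) x :=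
  (hasDerivAt_fderiv_uncurry_left (hf (x, t))).differentiableAt.hasDerivAt

lemma hasDerivAt_dt (hf : Differentiable ℝ (uncurry f)) (x t : ℝ) :
    HasDerivAt (fun s => f x s) (dt f x t) t :=
  (hasDerivAt_fderiv_uncurry_right (hf (x, t))).differentiableAt.hasDerivAt

lemma dx_add (hf : Differentiable ℝ (uncurry f)) (hg : Differentiable ℝ (uncurry g)) :
    dx (f + g) = dx f + dx g :=
  funext₂ fun x t => ((hasDerivAt_dx hf x t).add (hasDerivAt_dx hg x t)).deriv

lemma dx_smul (c : ℝ) (hf : Differentiable ℝ (uncurry f)) : dx (c • f) = c • dx f :=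
  funext₂ fun x t => ((hasDerivAt_dx hf x t).const_mul c).deriv

lemma dx_mul (hf : Differentiable ℝ (uncurry f)) (hg : Differentiable ℝ (uncurry g)) :
    dx (f * g) = f * dx g + g * dx f :=
  funext₂ fun x t =>
    ((hasDerivAt_dx hf x t).mul (hasDerivAt_dx hg x t)).deriv.trans <| by
      simp only [Pi.add_apply, Pi.mul_apply]; ring

lemma dt_add (hf : Differentiable ℝ (uncurry f)) (hg : Differentiable ℝ (uncurry g)) :
    dt (f + g) = dt f + dt g :=
  funext₂ fun x t => ((hasDerivAt_dt hf x t).add (hasDerivAt_dt hg x t)).deriv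

lemma dt_smul (c : ℝ) (hf : Differentiable ℝ (uncurry f)) : dt (c • f) = c • dt f :=
  funext₂ fun x t => ((hasDerivAt_dt hf x t).const_mul c).deriv

lemma dt_mul (hf : Differentiable ℝ (uncurry f)) (hg : Differentiable ℝ (uncurry g)) :
    dt (f * g) = f * dt g + g * dt f :=
  funext₂ fun x t =>
    ((hasDerivAt_dt hf x t).mul (hasDerivAt_dt hg x t)).deriv.trans <| by
      simp only [Pi.add_apply, Pi.mul_apply]; ring

lemma contDiff_uncurry_dx {m n : WithTop ℕ∞} (hf : ContDiff ℝ n (uncurry f)) (hmn : m + 1 ≤ n) :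
    ContDiff ℝ m (uncurry (dx f)) := by
  rw [uncurry_dx (hf.differentiable (by rintro rfl; simp at hmn))]
  exact (hf.fderiv_right hmn).clm_apply contDiff_const

lemma contDiff_uncurry_dt {m n : WithTop ℕ∞} (hf : ContDiff ℝ n (uncurry f)) (hmn : m + 1 ≤ n) :
    ContDiff ℝ m (uncurry (dt f)) := by
  rw [uncurry_dt (hf.differentiable (by rintro rfl; simp at hmn))]
  exact (hf.fderiv_right hmn).clm_apply contDiff_const

lemma dt_dx_comm (hf : ContDiff ℝ 2 (uncurry f)) : dt (dx f) = dx (dt f) := by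
  have hdiff : Differentiable ℝ (uncurry f) := hf.differentiable (by simp)
  have hfderiv : Differentiable ℝ (fderiv ℝ (uncurry f)) :=
    (hf.fderiv_right (m := 1) (by norm_num)).differentiable (by simp)
  have hdx : Differentiable ℝ (uncurry (dx f)) :=
    (contDiff_uncurry_dx (m := 1) hf (by norm_num)).differentiable (by simp)
  have hdt : Differentiable ℝ (uncurry (dt f)) :=
    (contDiff_uncurry_dt (m := 1) hf (by norm_num)).differentiable (by simp)
  apply uncurry_injective
  rw [uncurry_dt hdx, uncurry_dx hdt, uncurry_dx hdiff, uncurry_dt hdiff]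
  funext p
  have hsymm : IsSymmSndFDerivAt ℝ (uncurry f) p :=
    hf.contDiffAt.isSymmSndFDerivAt (by simp)
  rw [fderiv_clm_apply (hfderiv p) (by fun_prop), fderiv_clm_apply (hfderiv p) (by fun_prop)]
  simpa using hsymm.eq (0, 1) (1, 0)

end PartialDerivatives

section SmoothFunctions

open Function
open scoped ContDiff

/-- The algebra of smooth functions of `(x, t)`, as curried functions. -/
def smoothFunctions : Subalgebra ℝ (ℝ → ℝ → ℝ) where
  carrier := {f | ContDiff ℝ ∞ (uncurry f)}
  mul_mem' {f g} (hf : ContDiff ℝ ∞ (uncurry f)) (hg : ContDiff ℝ ∞ (uncurry g)) := hf.mul hg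
  add_mem' {f g} (hf : ContDiff ℝ ∞ (uncurry f)) (hg : ContDiff ℝ ∞ (uncurry g)) := hf.add hg
  algebraMap_mem' c := show ContDiff ℝ ∞ fun _ => c from contDiff_const

namespace smoothFunctions

lemma contDiff (f : smoothFunctions) : ContDiff ℝ ∞ (uncurry f.1) :=
  f.2

lemma differentiable (f : smoothFunctions) : Differentiable ℝ (uncurry f.1) :=
  (contDiff f).differentiable (by simp)

/-- The derivation `∂/∂x` of the algebra of smooth functions. -/
noncomputable def derivX : Derivation ℝ smoothFunctions smoothFunctions :=
  Derivation.mk'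
    { toFun f := ⟨dx f, contDiff_uncurry_dx (m := ∞) (contDiff f) le_rfl⟩
      map_add' f g := Subtype.ext (dx_add (differentiable f) (differentiable g))
      map_smul' c f := Subtype.ext (dx_smul c (differentiable f)) }
    fun f g => Subtype.ext (dx_mul (differentiable f) (differentiable g))

/-- The derivation `∂/∂t` of the algebra of smooth functions. -/
noncomputable def derivT : Derivation ℝ smoothFunctions smoothFunctions :=
  Derivation.mk'
    { toFun f := ⟨dt f, contDiff_uncurry_dt (m := ∞) (contDiff f) le_rfl⟩
      map_add' f g := Subtype.ext (dt_add (differentiable f) (differentiable g))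
      map_smul' c f := Subtype.ext (dt_smul c (differentiable f)) }
    fun f g => Subtype.ext (dt_mul (differentiable f) (differentiable g))

lemma derivT_derivX_comm (f : smoothFunctions) : derivT (derivX f) = derivX (derivT f) :=
  Subtype.ext (dt_dx_comm (contDiff_infty.mp (contDiff f) 2))

lemma isUnit_of_forall_ne_zero {f : smoothFunctions} (hf : ∀ x t, f.1 x t ≠ 0) : IsUnit f :=
  .of_mul_eq_one ⟨fun x t => (f.1 x t)⁻¹, (contDiff f).inv fun p => hf p.1 p.2⟩ <|
    Subtype.ext <| funext₂ fun x t => mul_inv_cancel₀ (hf x t)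

/-- The logarithm of a nowhere vanishing smooth function; it is `ln |f|`, by the convention for
`Real.log` at negative numbers. -/
noncomputable def log (f : smoothFunctions) (hf : ∀ x t, f.1 x t ≠ 0) : smoothFunctions :=
  ⟨fun x t => Real.log (f.1 x t), (contDiff f).log fun p => hf p.1 p.2⟩

lemma mul_derivX_log (f : smoothFunctions) (hf : ∀ x t, f.1 x t ≠ 0) :
    f * derivX (log f hf) = derivX f :=
  Subtype.ext <| funext₂ fun x t =>
    (congrArg (f.1 x t * ·) ((hasDerivAt_dx (differentiable f) x t).log (hf x t)).deriv).trans
      (mul_div_cancel₀ _ (hf x t))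

lemma mul_derivT_log (f : smoothFunctions) (hf : ∀ x t, f.1 x t ≠ 0) :
    f * derivT (log f hf) = derivT f :=
  Subtype.ext <| funext₂ fun x t =>
    (congrArg (f.1 x t * ·) ((hasDerivAt_dt (differentiable f) x t).log (hf x t)).deriv).trans
      (mul_div_cancel₀ _ (hf x t))

lemma kup1_of_derivT_eq_kup1Field {u : smoothFunctions} (hu : derivT u = kup1Field derivX u) :
    Kup1 u.1 :=
  congrFun₂ (congrArg Subtype.val hu)

variable {v : smoothFunctions}

lemma isSchwarzianSolution_of_kup3 (hvx : ∀ x t, dx v.1 x t ≠ 0) (hv : Kup3 v.1) :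
    IsSchwarzianSolution derivX derivT v := by
  have hunit : IsUnit (derivX v) := isUnit_of_forall_ne_zero hvx
  obtain ⟨q, hq⟩ : ∃ q, derivX (derivX v) = 2 * q * derivX v := by
    obtain ⟨b, hb⟩ := (isUnit_of_forall_ne_zero (f := 2 * derivX v) fun x t =>
      mul_ne_zero two_ne_zero (hvx x t)).exists_right_inv
    exact ⟨derivX (derivX v) * b, by linear_combination -derivX (derivX v) * hb⟩
  have hcleared : derivX v ^ 2 * derivT v = derivX v ^ 3 * schwarzianFlux derivX q := by
    rw [← kup3_numerator_eq derivX hq]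
    refine Subtype.ext <| funext₂ fun x t => ?_
    have hne := hvx x t
    change dx v.1 x t ^ 2 * dt v.1 x t = dx v.1 x t ^ 2 * dx (dx (dx (dx (dx v.1)))) x t
      - 5 * dx v.1 x t * dx (dx v.1) x t * dx (dx (dx (dx v.1))) x t
      + 5 * dx (dx v.1) x t ^ 2 * dx (dx (dx v.1)) x t
    rw [hv x t]
    field_simp
  exact ⟨q, hq, (hunit.pow 2).isRegular.left <| hcleared.trans (by ring)⟩

lemma kup1_const_sub_log_dx (hv : IsSchwarzianSolution derivX derivT v)
    (hvx : ∀ x t, dx v.1 x t ≠ 0) (c : ℝ) : Kup1 fun x t => c - Real.log (dx v.1 x t) := by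
  have hne (x t : ℝ) : (derivX v).1 x t ≠ 0 := hvx x t
  have hu : derivT (algebraMap ℝ smoothFunctions c - log (derivX v) hne) =
      kup1Field derivX (algebraMap ℝ smoothFunctions c - log (derivX v) hne) := by
    apply hv.derivation_eq_kup1Field (derivT_derivX_comm v)
      (isUnit_of_forall_ne_zero hne).isRegular.left
    · rw [map_sub, Derivation.map_algebraMap]
      linear_combination -mul_derivX_log (derivX v) hne
    · rw [map_sub, Derivation.map_algebraMap]
      linear_combination -mul_derivT_log (derivX v) hne
  exact kup1_of_derivT_eq_kup1Field hu

lemma kup1_const_sub_log_dx_add_two_mul_log (hv : IsSchwarzianSolution derivX derivT v)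
    (hne : ∀ x t, v.1 x t ≠ 0) (hvx : ∀ x t, dx v.1 x t ≠ 0) (c : ℝ) :
    Kup1 fun x t => c - Real.log (dx v.1 x t) + 2 * Real.log (v.1 x t) := by
  obtain ⟨w, hw⟩ : ∃ w, w * v = -1 := by
    obtain ⟨b, hb⟩ := (isUnit_of_forall_ne_zero hne).exists_left_inv
    exact ⟨-b, by linear_combination -hb⟩
  have hwx (x t : ℝ) : dx w.1 x t = dx v.1 x t / v.1 x t ^ 2 := by
    have hwv : w.1 x t * v.1 x t = -1 := congrFun₂ (congrArg Subtype.val hw) x t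
    have hdx : dx w.1 x t = w.1 x t ^ 2 * dx v.1 x t :=
      congrFun₂ (congrArg Subtype.val (derivation_eq_sq_mul_of_mul_eq_neg_one derivX hw)) x t
    rw [hdx, eq_div_of_mul_eq (hne x t) hwv]
    ring
  have hwx_ne (x t : ℝ) : dx w.1 x t ≠ 0 := by
    rw [hwx]
    exact div_ne_zero (hvx x t) (pow_ne_zero 2 (hne x t))
  convert kup1_const_sub_log_dx (hv.of_mul_eq_neg_one hw) hwx_ne c using 3 with x t
  rw [hwx, Real.log_div (hvx x t) (pow_ne_zero 2 (hne x t)), Real.log_pow]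
  push_cast
  ring

end smoothFunctions

end SmoothFunctions

/-- Proposition 4 b): `U = ln√2 - ln(v_x)` and `Ū = U + 2 ln v` both solve the
1st potential Kupershmidt equation. -/
theorem kup1_nonlocal_invariance
    (v : ℝ → ℝ → ℝ)
    (hv : ContDiff ℝ (⊤ : ℕ∞) (fun p : ℝ × ℝ => v p.1 p.2))
    (hpos : ∀ x t, 0 < v x t)
    (hvx : ∀ x t, 0 < dx v x t)
    (heq : Kup3 v) :
    Kup1 (fun x t => (1/2) * Real.log 2 - Real.log (dx v x t)) ∧
    Kup1 (fun x t => (1/2) * Real.log 2 - Real.log (dx v x t) + 2 * Real.log (v x t)) := by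
  let V : smoothFunctions := ⟨v, hv⟩
  have hne (x t : ℝ) : V.1 x t ≠ 0 := (hpos x t).ne'
  have hvx_ne (x t : ℝ) : dx V.1 x t ≠ 0 := (hvx x t).ne'
  have hV : IsSchwarzianSolution smoothFunctions.derivX smoothFunctions.derivT V :=
    smoothFunctions.isSchwarzianSolution_of_kup3 hvx_ne heq
  exact ⟨smoothFunctions.kup1_const_sub_log_dx hV hvx_ne _,
    smoothFunctions.kup1_const_sub_log_dx_add_two_mul_log hV hne hvx_ne _⟩
end
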